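/- Let d_1,...,d_n ∈ [0,1), and let P be the n×n partial stochastic matrix with specified diagonal entries p_{jj} = d_j and all off-diagonal entries unspecified. Then the minimum of Kemeny's constant over all stochastic completions of P with a single essential class equals (1/(2 Σ_{j=1}^n 1/(1−d_j))) · ((Σ_{j=1}^n 1/(1−d_j))^2 − Σ_{j=1}^n 1/(1−d_j)^2), and it is attained exactly by the matrices D + (I−D)C where D = diag(d_1,...,d_n) and C is a cyclic permutation matrix of a cycle of length n. -/

import Mathlib

open Finset Matrix

def IsStochastic {n : ℕ} (T : Matrix (Fin n) (Fin n) ℝ) : Prop :=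
  (∀ i j, 0 ≤ T i j) ∧ ∀ i, ∑ j, T i j = 1

def chainStep {n : ℕ} (T : Matrix (Fin n) (Fin n) ℝ) (i j : Fin n) : Prop := 0 < T i j

def reaches {n : ℕ} (T : Matrix (Fin n) (Fin n) ℝ) : Fin n → Fin n → Prop :=
  Relation.ReflTransGen (chainStep T)

def EssentialState {n : ℕ} (T : Matrix (Fin n) (Fin n) ℝ) (i : Fin n) : Prop :=
  ∀ j, reaches T i j → reaches T j i

def SingleEssentialClass {n : ℕ} (T : Matrix (Fin n) (Fin n) ℝ) : Prop :=
  (∃ i, EssentialState T i) ∧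
    ∀ i j, EssentialState T i → EssentialState T j → reaches T i j

noncomputable def kemeny {n : ℕ} (T : Matrix (Fin n) (Fin n) ℝ) : ℝ :=
  ((((Matrix.charpoly (T.map (Complex.ofReal))).roots.erase 1).map
      (fun z => (1 - z)⁻¹)).sum).re

/-- A square real matrix with nonpositive off-diagonal entries and nonnegative row sums. -/
def IsDominantZ {ι : Type*} [Fintype ι] (M : Matrix ι ι ℝ) : Prop :=
  (∀ i j, i ≠ j → M i j ≤ 0) ∧ ∀ i, 0 ≤ ∑ j, M i j

theorem nonneg_of_forall_add_smul_one {ι : Type*} [DecidableEq ι] {M : Matrix ι ι ℝ}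
    {f : Matrix ι ι ℝ → ℝ} (hf : Continuous f)
    (h : ∀ ε : ℝ, 0 < ε → 0 ≤ f (M + ε • (1 : Matrix ι ι ℝ))) : 0 ≤ f M := by
  have hc : Continuous fun ε : ℝ => f (M + ε • (1 : Matrix ι ι ℝ)) := by fun_prop
  have ht := (hc.tendsto 0).mono_left (nhdsWithin_le_nhds (s := Set.Ioi 0))
  simp only [zero_smul, add_zero] at ht
  exact ge_of_tendsto ht (Filter.eventually_of_mem self_mem_nhdsWithin fun ε hε => h ε hε)

section DominantZ

variable {ι : Type*} [Fintype ι] {M : Matrix ι ι ℝ}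

/-- The minimum principle for matrices with nonpositive off-diagonal entries and positive
row sums. -/
theorem nonneg_of_mulVec_nonneg (hoff : ∀ i j, i ≠ j → M i j ≤ 0)
    (hrow : ∀ i, 0 < ∑ j, M i j) {x : ι → ℝ} (hx : ∀ i, 0 ≤ (M *ᵥ x) i) (i : ι) : 0 ≤ x i := by
  have : Nonempty ι := ⟨i⟩
  obtain ⟨k, hk⟩ := Finite.exists_min x
  refine le_trans ?_ (hk i)
  by_contra! hneg
  have hle : (M *ᵥ x) k ≤ ∑ j, M k j * x k := by
    refine sum_le_sum fun j _ => ?_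
    rcases eq_or_ne k j with rfl | hkj
    · exact le_rfl
    · exact mul_le_mul_of_nonpos_left (hk j) (hoff k j hkj)
  rw [← sum_mul] at hle
  have := mul_neg_of_pos_of_neg (hrow k) hneg
  linarith [hx k]

variable [DecidableEq ι]

theorem det_ne_zero_of_row_sum_pos (hoff : ∀ i j, i ≠ j → M i j ≤ 0)
    (hrow : ∀ i, 0 < ∑ j, M i j) : M.det ≠ 0 := by
  refine det_ne_zero_of_sum_row_lt_diag fun k => ?_
  have hsum : ∑ j ∈ univ.erase k, ‖M k j‖ = -∑ j ∈ univ.erase k, M k j := by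
    rw [← sum_neg_distrib]
    refine sum_congr rfl fun j hj => ?_
    rw [Real.norm_eq_abs, abs_of_nonpos (hoff k j (ne_of_mem_erase hj).symm)]
  have hk := hrow k
  rw [← add_sum_erase _ _ (mem_univ k)] at hk
  rw [hsum]
  exact lt_of_lt_of_le (by linarith) (le_abs_self (M k k))

theorem det_pos_of_row_sum_pos (hoff : ∀ i j, i ≠ j → M i j ≤ 0)
    (hrow : ∀ i, 0 < ∑ j, M i j) : 0 < M.det := by
  by_contra! hneg
  let f : ℝ → ℝ := fun s => (s • M + (1 - s) • (1 : Matrix ι ι ℝ)).det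
  have hf : Continuous f := by
    refine Continuous.matrix_det ?_
    fun_prop
  have h0 : f 0 = 1 := by simp [f]
  have h1 : f 1 = M.det := by simp [f]
  obtain ⟨s, ⟨hs0, hs1⟩, hs⟩ := intermediate_value_Icc' zero_le_one hf.continuousOn
    (show (0 : ℝ) ∈ Set.Icc (f 1) (f 0) by rw [h0, h1]; exact ⟨hneg, zero_le_one⟩)
  refine det_ne_zero_of_row_sum_pos (M := s • M + (1 - s) • (1 : Matrix ι ι ℝ)) ?_ ?_ hs
  · intro i j hij
    simpa [one_apply_ne hij] using mul_nonpos_of_nonneg_of_nonpos hs0 (hoff i j hij)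
  · intro i
    have : ∑ j, (s • M + (1 - s) • (1 : Matrix ι ι ℝ)) i j = s * ∑ j, M i j + (1 - s) := by
      simp [sum_add_distrib, mul_sum, one_apply]
    rw [this]
    rcases hs0.eq_or_lt with rfl | hpos
    · simp
    · have := mul_pos hpos (hrow i)
      linarith

theorem adjugate_nonneg_of_row_sum_pos (hoff : ∀ i j, i ≠ j → M i j ≤ 0)
    (hrow : ∀ i, 0 < ∑ j, M i j) (i j : ι) : 0 ≤ M.adjugate i j := by
  refine nonneg_of_mulVec_nonneg hoff hrow (x := fun k => M.adjugate k j) (fun k => ?_) i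
  have h : (M * M.adjugate) k j = (M.det • (1 : Matrix ι ι ℝ)) k j := by rw [mul_adjugate]
  have h' : (M *ᵥ fun k => M.adjugate k j) k = (M.det • (1 : Matrix ι ι ℝ)) k j := by
    rw [← h]; rfl
  rw [h', Matrix.smul_apply, smul_eq_mul, one_apply]
  have := (det_pos_of_row_sum_pos hoff hrow).le
  split_ifs <;> simp [this]

theorem IsDominantZ.add_smul_one (hM : IsDominantZ M) {ε : ℝ} (hε : 0 < ε) :
    (∀ i j, i ≠ j → (M + ε • (1 : Matrix ι ι ℝ)) i j ≤ 0) ∧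
      ∀ i, 0 < ∑ j, (M + ε • (1 : Matrix ι ι ℝ)) i j := by
  refine ⟨fun i j hij => by simpa [one_apply_ne hij] using hM.1 i j hij, fun i => ?_⟩
  have : ∑ j, (M + ε • (1 : Matrix ι ι ℝ)) i j = ∑ j, M i j + ε := by
    simp [sum_add_distrib, one_apply]
  linarith [hM.2 i]

theorem IsDominantZ.det_nonneg (hM : IsDominantZ M) : 0 ≤ M.det :=
  nonneg_of_forall_add_smul_one (f := det) (by fun_prop) fun _ hε =>
    (det_pos_of_row_sum_pos (hM.add_smul_one hε).1 (hM.add_smul_one hε).2).le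

theorem IsDominantZ.adjugate_nonneg (hM : IsDominantZ M) (i j : ι) : 0 ≤ M.adjugate i j :=
  nonneg_of_forall_add_smul_one (f := fun A => A.adjugate i j) (by fun_prop) fun _ hε =>
    adjugate_nonneg_of_row_sum_pos (hM.add_smul_one hε).1 (hM.add_smul_one hε).2 i j

theorem diag_mul_adjugate (M : Matrix ι ι ℝ) (k j : ι) :
    M k k * M.adjugate k j =
      (if k = j then M.det else 0) + ∑ l ∈ univ.erase k, -M k l * M.adjugate l j := by
  have h : (M * M.adjugate) k j = if k = j then M.det else 0 := by
    rw [mul_adjugate]; simp [one_apply]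
  rw [mul_apply, ← add_sum_erase _ _ (mem_univ k)] at h
  simp only [neg_mul, sum_neg_distrib]
  linarith

theorem IsDominantZ.neg_mul_adjugate_nonneg (hM : IsDominantZ M) (k j : ι) :
    ∀ l ∈ univ.erase k, 0 ≤ -M k l * M.adjugate l j := fun l hl =>
  mul_nonneg (neg_nonneg.2 (hM.1 k l (ne_of_mem_erase hl).symm)) (hM.adjugate_nonneg l j)

theorem IsDominantZ.det_le (hM : IsDominantZ M) (j : ι) :
    M.det ≤ M j j * M.adjugate j j := by
  rw [diag_mul_adjugate, if_pos rfl]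
  exact le_add_of_nonneg_right (sum_nonneg (hM.neg_mul_adjugate_nonneg j j))

theorem IsDominantZ.adjugate_pos (hM : IsDominantZ M) {k l j : ι} (hkl : k ≠ l)
    (hneg : M k l < 0) (hl : 0 < M.adjugate l j) : 0 < M.adjugate k j := by
  refine (hM.adjugate_nonneg k j).lt_of_ne fun h => ?_
  have hsum := diag_mul_adjugate M k j
  have hle := single_le_sum (hM.neg_mul_adjugate_nonneg k j) (mem_erase.2 ⟨hkl.symm, mem_univ l⟩)
  have hpos := mul_pos (neg_pos.2 hneg) hl
  have hdet := hM.det_nonneg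
  rw [← h, mul_zero] at hsum
  split_ifs at hsum <;> linarith

theorem IsDominantZ.adjugate_eq_zero (hM : IsDominantZ M) {j l : ι} (hjl : j ≠ l)
    (hneg : M j l < 0) (hdet : M.det = M j j * M.adjugate j j) : M.adjugate l j = 0 := by
  have hsum := diag_mul_adjugate M j j
  rw [if_pos rfl, ← hdet, left_eq_add,
    sum_eq_zero_iff_of_nonneg (hM.neg_mul_adjugate_nonneg j j)] at hsum
  have h := hsum l (mem_erase.2 ⟨hjl.symm, mem_univ l⟩)
  exact (mul_eq_zero.1 h).resolve_left (neg_ne_zero.2 hneg.ne)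

end DominantZ

section Derivative

variable {ι : Type*} [DecidableEq ι] {R : Type*} [CommRing R]

theorem map_updateRow_single {S : Type*} [CommRing S] (f : R →+* S) (M : Matrix ι ι R) (i : ι) :
    (M.updateRow i (Pi.single i 1)).map f = (M.map f).updateRow i (Pi.single i 1) := by
  rw [Matrix.map_updateRow]
  congr 1
  ext1 j
  rcases eq_or_ne i j with rfl | hij
  · simp
  · simp [hij.symm]

variable [Fintype ι]

theorem det_eq_sum_prod_rows (M : Matrix ι ι R) :
    M.det = ∑ σ : Equiv.Perm ι, ((Equiv.Perm.sign σ : ℤ) : R) * ∏ k, M k (σ k) := by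
  rw [← det_transpose, det_apply']; rfl

theorem derivative_det_eq_sum_updateRow (M : Matrix ι ι (Polynomial R)) :
    Polynomial.derivative M.det =
      ∑ i, (M.updateRow i fun j => Polynomial.derivative (M i j)).det := by
  simp only [det_eq_sum_prod_rows]
  rw [Polynomial.derivative_sum, sum_comm]
  refine sum_congr rfl fun σ _ => ?_
  rw [Polynomial.derivative_intCast_mul, Polynomial.derivative_prod_finset, mul_sum]
  refine sum_congr rfl fun i _ => ?_
  rw [← mul_prod_erase _ _ (mem_univ i), updateRow_self, mul_comm (Polynomial.derivative _)]
  congr 2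
  refine prod_congr rfl fun k hk => ?_
  rw [updateRow_ne (ne_of_mem_erase hk)]

theorem derivative_charpoly (T : Matrix ι ι R) :
    Polynomial.derivative T.charpoly =
      ∑ i, (T.charmatrix.updateRow i (Pi.single i 1)).det := by
  rw [charpoly, derivative_det_eq_sum_updateRow]
  refine sum_congr rfl fun i _ => ?_
  congr 2
  ext1 j
  rcases eq_or_ne i j with rfl | hij
  · simp
  · simp [hij, hij.symm]

theorem derivative_derivative_charpoly (T : Matrix ι ι R) :
    Polynomial.derivative (Polynomial.derivative T.charpoly) =
      ∑ i, ∑ j ∈ univ.erase i,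
        ((T.charmatrix.updateRow i (Pi.single i 1)).updateRow j (Pi.single j 1)).det := by
  rw [derivative_charpoly, Polynomial.derivative_sum]
  refine sum_congr rfl fun i _ => ?_
  rw [derivative_det_eq_sum_updateRow, ← add_sum_erase _ _ (mem_univ i)]
  have hzero : (fun j => Polynomial.derivative
      (T.charmatrix.updateRow i (Pi.single i 1) i j)) = 0 := by
    ext1 j
    rcases eq_or_ne i j with rfl | hij
    · simp
    · simp [hij.symm]
  rw [hzero, det_eq_zero_of_row_eq_zero i (by simp), zero_add]
  refine sum_congr rfl fun k hk => ?_
  congr 2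
  ext1 j
  rw [updateRow_ne (ne_of_mem_erase hk)]
  rcases eq_or_ne k j with rfl | hij
  · simp
  · simp [hij, hij.symm]

theorem charmatrix_map_eval_one (T : Matrix ι ι R) :
    T.charmatrix.map (Polynomial.evalRingHom 1) = 1 - T := by
  ext i j
  rcases eq_or_ne i j with rfl | hij
  · simp
  · simp [hij]

theorem eval_one_derivative_charpoly (T : Matrix ι ι R) :
    (Polynomial.derivative T.charpoly).eval 1 =
      ∑ i, ((1 - T).updateRow i (Pi.single i 1)).det := by
  rw [derivative_charpoly, Polynomial.eval_finsetSum]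
  refine sum_congr rfl fun i _ => ?_
  rw [← Polynomial.coe_evalRingHom, RingHom.map_det, RingHom.mapMatrix_apply,
    map_updateRow_single, charmatrix_map_eval_one]

theorem eval_one_derivative_derivative_charpoly (T : Matrix ι ι R) :
    (Polynomial.derivative (Polynomial.derivative T.charpoly)).eval 1 =
      ∑ i, ∑ j ∈ univ.erase i,
        (((1 - T).updateRow i (Pi.single i 1)).updateRow j (Pi.single j 1)).det := by
  rw [derivative_derivative_charpoly, Polynomial.eval_finsetSum]
  refine sum_congr rfl fun i _ => ?_
  rw [Polynomial.eval_finsetSum]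
  refine sum_congr rfl fun j _ => ?_
  rw [← Polynomial.coe_evalRingHom, RingHom.map_det, RingHom.mapMatrix_apply,
    map_updateRow_single, map_updateRow_single, charmatrix_map_eval_one]

end Derivative

/-- If `1` is a simple root of a complex polynomial `p`, then `∑ 1 / (1 - z)` over the other
roots is `p''(1) / (2 p'(1))`. -/
theorem sum_roots_erase_one_eq (p : Polynomial ℂ) (hp : p.eval 1 = 0)
    (hp' : (Polynomial.derivative p).eval 1 ≠ 0) :
    ((p.roots.erase 1).map fun z => (1 - z)⁻¹).sum =
      (Polynomial.derivative (Polynomial.derivative p)).eval 1 /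
        (2 * (Polynomial.derivative p).eval 1) := by
  obtain ⟨q, rfl⟩ := Polynomial.dvd_iff_isRoot.2 hp
  have hq : (Polynomial.derivative ((Polynomial.X - Polynomial.C 1) * q)).eval 1 = q.eval 1 := by
    simp [Polynomial.derivative_mul]
  have hq' : (Polynomial.derivative (Polynomial.derivative
      ((Polynomial.X - Polynomial.C 1) * q))).eval 1 = 2 * (Polynomial.derivative q).eval 1 := by
    simp [Polynomial.derivative_mul]; ring
  have hne : q.eval 1 ≠ 0 := hq ▸ hp'
  have hq0 : q ≠ 0 := by rintro rfl; simp at hne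
  rw [Polynomial.roots_mul (mul_ne_zero (Polynomial.X_sub_C_ne_zero 1) hq0),
    Polynomial.roots_X_sub_C, Multiset.singleton_add, Multiset.erase_cons_head, hq, hq']
  have h := (IsAlgClosed.splits q).eval_derivative_div_eval_of_ne_zero hne
  simp only [one_div] at h
  rw [← h]
  field_simp

theorem kemeny_eq_div {n : ℕ} {T : Matrix (Fin n) (Fin n) ℝ} (hT : T.charpoly.eval 1 = 0)
    (hT' : (Polynomial.derivative T.charpoly).eval 1 ≠ 0) :
    kemeny T = (Polynomial.derivative (Polynomial.derivative T.charpoly)).eval 1 /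
      (2 * (Polynomial.derivative T.charpoly).eval 1) := by
  have hmap : (T.map Complex.ofReal).charpoly = T.charpoly.map Complex.ofRealHom :=
    charpoly_map T Complex.ofRealHom
  have heval (p : Polynomial ℝ) : (p.map Complex.ofRealHom).eval 1 = ((p.eval 1 : ℝ) : ℂ) := by
    simp
  rw [kemeny, hmap, sum_roots_erase_one_eq, Polynomial.derivative_map, Polynomial.derivative_map,
    heval, heval]
  · norm_cast
  · rw [heval, hT, Complex.ofReal_zero]
  · rw [Polynomial.derivative_map, heval]
    exact_mod_cast hT'

section Weights

variable {n : ℕ}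

/-- The matrix `1 - T` with its row `i` replaced by its diagonal part. -/
def groundedLaplacian (T : Matrix (Fin n) (Fin n) ℝ) (i : Fin n) : Matrix (Fin n) (Fin n) ℝ :=
  (1 - T).updateRow i (Pi.single i (1 - T i i))

/-- The determinant of `1 - T` grounded at `i`. -/
def rootWeight (T : Matrix (Fin n) (Fin n) ℝ) (i : Fin n) : ℝ :=
  (groundedLaplacian T i).det

/-- The determinant of `1 - T` grounded at `i` and `j`. -/
def pairWeight (T : Matrix (Fin n) (Fin n) ℝ) (i j : Fin n) : ℝ :=
  ((groundedLaplacian T i).updateRow j (Pi.single j (1 - T j j))).det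

variable {T : Matrix (Fin n) (Fin n) ℝ}

theorem groundedLaplacian_diag (i j : Fin n) : groundedLaplacian T i j j = 1 - T j j := by
  rcases eq_or_ne j i with rfl | hji
  · simp [groundedLaplacian]
  · simp [groundedLaplacian, updateRow_ne hji]

theorem groundedLaplacian_apply {i k l : Fin n} (hki : k ≠ i) (hkl : k ≠ l) :
    groundedLaplacian T i k l = -T k l := by
  simp [groundedLaplacian, updateRow_ne hki, one_apply_ne hkl]

theorem IsStochastic.isDominantZ_groundedLaplacian (hT : IsStochastic T) (i : Fin n) :
    IsDominantZ (groundedLaplacian T i) := by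
  refine ⟨fun k l hkl => ?_, fun k => ?_⟩
  · rcases eq_or_ne k i with rfl | hki
    · simp [groundedLaplacian, hkl.symm]
    · rw [groundedLaplacian_apply hki hkl]
      exact neg_nonpos.2 (hT.1 k l)
  · rcases eq_or_ne k i with rfl | hki
    · have := single_le_sum (fun l _ => hT.1 k l) (mem_univ k)
      rw [hT.2 k] at this
      simpa [groundedLaplacian] using this
    · simp [groundedLaplacian, updateRow_ne hki, one_apply, hT.2 k]

theorem single_eq_smul (j : Fin n) (c : ℝ) :
    (Pi.single j c : Fin n → ℝ) = c • Pi.single j 1 := by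
  rw [← Pi.single_smul, smul_eq_mul, mul_one]

theorem pairWeight_eq_mul_adjugate (i j : Fin n) :
    pairWeight T i j = groundedLaplacian T i j j * (groundedLaplacian T i).adjugate j j := by
  rw [pairWeight, single_eq_smul, det_updateRow_smul, adjugate_apply, groundedLaplacian_diag]

theorem pairWeight_comm {i j : Fin n} (hij : i ≠ j) : pairWeight T i j = pairWeight T j i := by
  rw [pairWeight, groundedLaplacian, updateRow_comm _ hij, pairWeight, groundedLaplacian]

theorem IsStochastic.rootWeight_nonneg (hT : IsStochastic T) (i : Fin n) : 0 ≤ rootWeight T i :=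
  (hT.isDominantZ_groundedLaplacian i).det_nonneg

theorem IsStochastic.rootWeight_le_pairWeight (hT : IsStochastic T) (i j : Fin n) :
    rootWeight T i ≤ pairWeight T i j := by
  rw [pairWeight_eq_mul_adjugate]
  exact (hT.isDominantZ_groundedLaplacian i).det_le j

theorem IsStochastic.charpoly_eval_one (hT : IsStochastic T) (hn : 0 < n) :
    T.charpoly.eval 1 = 0 := by
  have hmat : scalar (Fin n) (1 : ℝ) - T = 1 - T := by simp
  rw [eval_charpoly, hmat, ← exists_mulVec_eq_zero_iff]
  refine ⟨fun _ => 1, fun h => one_ne_zero (congrFun h ⟨0, hn⟩), ?_⟩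
  ext i
  simp [mulVec, dotProduct, one_apply, hT.2 i]

theorem eval_one_derivative_charpoly_eq_rootWeight (hT : ∀ i, T i i < 1) :
    (Polynomial.derivative T.charpoly).eval 1 = ∑ i, (1 - T i i)⁻¹ * rootWeight T i := by
  rw [eval_one_derivative_charpoly]
  refine sum_congr rfl fun i _ => ?_
  rw [rootWeight, groundedLaplacian, single_eq_smul i (1 - T i i), det_updateRow_smul,
    inv_mul_cancel_left₀ (sub_pos.2 (hT i)).ne']

theorem eval_one_derivative_derivative_charpoly_eq_pairWeight (hT : ∀ i, T i i < 1) :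
    (Polynomial.derivative (Polynomial.derivative T.charpoly)).eval 1 =
      ∑ i, ∑ j ∈ univ.erase i, (1 - T i i)⁻¹ * (1 - T j j)⁻¹ * pairWeight T i j := by
  rw [eval_one_derivative_derivative_charpoly]
  refine sum_congr rfl fun i _ => sum_congr rfl fun j hj => ?_
  have hji := ne_of_mem_erase hj
  rw [pairWeight, groundedLaplacian, single_eq_smul j (1 - T j j), det_updateRow_smul,
    single_eq_smul i (1 - T i i), updateRow_comm _ hji.symm, updateRow_comm _ hji.symm,
    det_updateRow_smul]
  have hi := (sub_pos.2 (hT i)).ne'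
  have hj := (sub_pos.2 (hT j)).ne'
  field_simp

end Weights

section EssentialClass

variable {n : ℕ} {T : Matrix (Fin n) (Fin n) ℝ}

theorem exists_reaches_essentialState (T : Matrix (Fin n) (Fin n) ℝ) (k : Fin n) :
    ∃ e, EssentialState T e ∧ reaches T k e := by
  classical
  obtain ⟨e, he, hmin⟩ := exists_min_image (univ.filter (reaches T k))
    (fun l => (univ.filter (reaches T l)).card)
    ⟨k, mem_filter.2 ⟨mem_univ k, Relation.ReflTransGen.refl⟩⟩
  have hke : reaches T k e := (mem_filter.1 he).2
  refine ⟨e, fun y hy => ?_, hke⟩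
  have hsub : univ.filter (reaches T y) ⊆ univ.filter (reaches T e) := fun z hz =>
    mem_filter.2 ⟨mem_univ z, hy.trans (mem_filter.1 hz).2⟩
  have heq := eq_of_subset_of_card_le hsub
    (hmin y (mem_filter.2 ⟨mem_univ y, hke.trans hy⟩))
  have : e ∈ univ.filter (reaches T y) :=
    heq ▸ mem_filter.2 ⟨mem_univ e, Relation.ReflTransGen.refl⟩
  exact (mem_filter.1 this).2

theorem IsStochastic.nonpos_of_groundedLaplacian_mulVec_eq_zero (hT : IsStochastic T)
    {e : Fin n} (hee : T e e < 1) (hreach : ∀ k, reaches T k e) {v : Fin n → ℝ}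
    (hv : groundedLaplacian T e *ᵥ v = 0) (k : Fin n) : v k ≤ 0 := by
  have hve : v e = 0 := by
    have h := congrFun hv e
    simp only [groundedLaplacian, mulVec, updateRow_self, single_dotProduct, Pi.zero_apply] at h
    exact (mul_eq_zero.1 h).resolve_left (sub_pos.2 hee).ne'
  have hharm (i : Fin n) (hi : i ≠ e) : ∑ l, T i l * v l = v i := by
    have h := congrFun hv i
    simp only [groundedLaplacian, mulVec, updateRow_ne hi, Pi.zero_apply] at h
    have h' : ((1 - T) *ᵥ v) i = 0 := h
    rw [sub_mulVec, one_mulVec, Pi.sub_apply, sub_eq_zero] at h'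
    exact h'.symm
  have : Nonempty (Fin n) := ⟨e⟩
  obtain ⟨m, hm⟩ := Finite.exists_max v
  suffices ∀ i, reaches T i e → v i = v m → v m = 0 from
    (hm k).trans (this m (hreach m) rfl).le
  intro i hi
  induction hi using Relation.ReflTransGen.head_induction_on with
  | refl => exact fun h => h.symm.trans hve
  | @head i l hil _ ih =>
    intro him
    rcases eq_or_ne i e with rfl | hie
    · exact him.symm.trans hve
    · refine ih ?_
      have hsum : ∑ j, T i j * (v m - v j) = 0 := by
        simp only [mul_sub, sum_sub_distrib]
        rw [hharm i hie, ← sum_mul, hT.2 i, one_mul, him, sub_self]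
      rw [sum_eq_zero_iff_of_nonneg fun j _ =>
        mul_nonneg (hT.1 i j) (sub_nonneg.2 (hm j))] at hsum
      have := (mul_eq_zero.1 (hsum l (mem_univ l))).resolve_left (ne_of_gt hil)
      linarith

theorem IsStochastic.rootWeight_pos (hT : IsStochastic T) {e : Fin n} (hee : T e e < 1)
    (hreach : ∀ k, reaches T k e) : 0 < rootWeight T e := by
  refine (hT.rootWeight_nonneg e).lt_of_ne fun h => ?_
  obtain ⟨v, hv0, hv⟩ := exists_mulVec_eq_zero_iff.2 h.symm
  refine hv0 (funext fun k => le_antisymm ?_ ?_)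
  · exact hT.nonpos_of_groundedLaplacian_mulVec_eq_zero hee hreach hv k
  · have := hT.nonpos_of_groundedLaplacian_mulVec_eq_zero hee hreach (v := -v)
      (by rw [mulVec_neg, hv, neg_zero]) k
    simpa using this

theorem SingleEssentialClass.exists_rootWeight_pos (hS : SingleEssentialClass T)
    (hT : IsStochastic T) (hdiag : ∀ i, T i i < 1) : ∃ e, 0 < rootWeight T e := by
  obtain ⟨e, he⟩ := hS.1
  refine ⟨e, hT.rootWeight_pos (hdiag e) fun k => ?_⟩
  obtain ⟨y, hy, hky⟩ := exists_reaches_essentialState T k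
  exact hky.trans (hS.2 y e hy he)

end EssentialClass

section Gap

variable {ι : Type*} [DecidableEq ι] {a t : ι → ℝ} {u : ι → ι → ℝ}

theorem cyclic_nonneg (hu : ∀ i j, t i ≤ u i j) (hsymm : ∀ i j, i ≠ j → u i j = u j i)
    (i j k : ι) : 0 ≤ (if i = j then 0 else u i j - t k) +
      (if j = k then 0 else u j k - t i) + (if k = i then 0 else u k i - t j) := by
  have hij := hu i j
  have hjk := hu j k
  have hki := hu k i
  have hik := hu i k
  have hik' := hsymm i k
  split_ifs <;> grind

variable [Fintype ι]

theorem gap_eq_sum (a t : ι → ℝ) (u : ι → ι → ℝ) :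
    3 * ((∑ i, a i) * (∑ i, ∑ j ∈ univ.erase i, a i * a j * u i j) -
      ((∑ i, a i) ^ 2 - ∑ i, a i ^ 2) * ∑ i, a i * t i) =
    ∑ i, ∑ j, ∑ k, a i * a j * a k * ((if i = j then 0 else u i j - t k) +
      (if j = k then 0 else u j k - t i) + (if k = i then 0 else u k i - t j)) := by
  let w (i j k : ι) : ℝ := a i * a j * a k * if i = j then 0 else u i j - t k
  have hw : ∑ i, ∑ j, ∑ k, w i j k =
      (∑ i, a i) * (∑ i, ∑ j ∈ univ.erase i, a i * a j * u i j) -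
        ((∑ i, a i) ^ 2 - ∑ i, a i ^ 2) * ∑ i, a i * t i := by
    have hsq : (∑ i, a i) ^ 2 - ∑ i, a i ^ 2 = ∑ i, ∑ j ∈ univ.erase i, a i * a j := by
      rw [sq, sum_mul_sum, ← sum_sub_distrib]
      refine sum_congr rfl fun i _ => ?_
      rw [← add_sum_erase _ _ (mem_univ i)]
      ring
    rw [hsq, mul_sum, sum_mul, ← sum_sub_distrib]
    refine sum_congr rfl fun i _ => ?_
    rw [mul_sum, sum_mul, ← sum_sub_distrib, ← add_sum_erase _ _ (mem_univ i)]
    simp only [w, if_true, mul_zero, sum_const_zero, zero_add]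
    refine sum_congr rfl fun j hj => ?_
    simp only [if_neg (ne_of_mem_erase hj).symm]
    rw [sum_mul, mul_sum, ← sum_sub_distrib]
    exact sum_congr rfl fun k _ => by ring
  have hrot₁ : ∑ i, ∑ j, ∑ k, w j k i = ∑ i, ∑ j, ∑ k, w i j k := by
    rw [sum_comm]
    exact sum_congr rfl fun i _ => sum_comm
  have hrot₂ : ∑ i, ∑ j, ∑ k, w k i j = ∑ i, ∑ j, ∑ k, w i j k :=
    (sum_congr rfl fun i _ => sum_comm).trans sum_comm
  have hsplit : ∀ i j k, a i * a j * a k * ((if i = j then 0 else u i j - t k) +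
      (if j = k then 0 else u j k - t i) + (if k = i then 0 else u k i - t j)) =
      w i j k + w j k i + w k i j := fun i j k => by simp only [w]; ring
  simp only [hsplit, sum_add_distrib]
  rw [hrot₁, hrot₂, hw]
  ring

theorem gap_nonneg (ha : ∀ i, 0 < a i) (hu : ∀ i j, t i ≤ u i j)
    (hsymm : ∀ i j, i ≠ j → u i j = u j i) :
    0 ≤ (∑ i, a i) * (∑ i, ∑ j ∈ univ.erase i, a i * a j * u i j) -
      ((∑ i, a i) ^ 2 - ∑ i, a i ^ 2) * ∑ i, a i * t i := by
  have h := gap_eq_sum a t u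
  have : 0 ≤ ∑ i, ∑ j, ∑ k, a i * a j * a k * ((if i = j then 0 else u i j - t k) +
      (if j = k then 0 else u j k - t i) + (if k = i then 0 else u k i - t j)) :=
    sum_nonneg fun i _ => sum_nonneg fun j _ => sum_nonneg fun k _ =>
      mul_nonneg (mul_pos (mul_pos (ha i) (ha j)) (ha k)).le (cyclic_nonneg hu hsymm i j k)
  linarith

theorem gap_eq_zero_iff (ha : ∀ i, 0 < a i) (hu : ∀ i j, t i ≤ u i j)
    (hsymm : ∀ i j, i ≠ j → u i j = u j i) :
    (∑ i, a i) * (∑ i, ∑ j ∈ univ.erase i, a i * a j * u i j) -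
      ((∑ i, a i) ^ 2 - ∑ i, a i ^ 2) * ∑ i, a i * t i = 0 ↔
    ∀ i j, i ≠ j → u i j = t i := by
  have hpos (i j k : ι) : 0 < a i * a j * a k := mul_pos (mul_pos (ha i) (ha j)) (ha k)
  have hterm (i j k : ι) := mul_nonneg (hpos i j k).le (cyclic_nonneg hu hsymm i j k)
  rw [← mul_eq_zero_iff_left (three_ne_zero (α := ℝ)), gap_eq_sum]
  constructor
  · intro h i j hij
    rw [sum_eq_zero_iff_of_nonneg fun i _ => sum_nonneg fun j _ => sum_nonneg fun k _ =>
      hterm i j k] at h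
    have h₁ := h i (mem_univ i)
    rw [sum_eq_zero_iff_of_nonneg fun j _ => sum_nonneg fun k _ => hterm i j k] at h₁
    have h₂ := h₁ i (mem_univ i)
    rw [sum_eq_zero_iff_of_nonneg fun k _ => hterm i i k] at h₂
    have h₃ := (mul_eq_zero.1 (h₂ j (mem_univ j))).resolve_left (hpos i i j).ne'
    rw [if_pos rfl, if_neg hij, if_neg hij.symm] at h₃
    linarith [hsymm i j hij]
  · intro h
    have ht : ∀ i j, t i = t j := fun i j => by
      rcases eq_or_ne i j with rfl | hij
      · rfl
      · rw [← h i j hij, hsymm i j hij, h j i hij.symm]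
    refine sum_eq_zero fun i _ => sum_eq_zero fun j _ => sum_eq_zero fun k _ => ?_
    have hi (x y z : ι) : (if x = y then 0 else u x y - t z) = 0 := by
      split_ifs with hxy
      · rfl
      · rw [h x y hxy, ht x z, sub_self]
    rw [hi, hi, hi]
    ring

end Gap

section Cycle

variable {n : ℕ} {T : Matrix (Fin n) (Fin n) ℝ}

theorem IsStochastic.adjugate_pos_of_iterate (hT : IsStochastic T) {i j : Fin n}
    (hj : 0 < (groundedLaplacian T i).adjugate j j) {f : Fin n → Fin n} (hf : ∀ k, f k ≠ k)
    (hTf : ∀ k, 0 < T k (f k)) (m : ℕ) (y : Fin n) (hy : ∀ s, f^[s] y ≠ i)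
    (hm : f^[m] y = j) : 0 < (groundedLaplacian T i).adjugate y j := by
  induction m generalizing y with
  | zero =>
    obtain rfl : y = j := hm
    exact hj
  | succ m ih =>
    refine (hT.isDominantZ_groundedLaplacian i).adjugate_pos (hf y).symm ?_
      (ih (f y) (fun s => hy (s + 1)) hm)
    rw [groundedLaplacian_apply (show y ≠ i from hy 0) (hf y).symm]
    exact neg_neg_iff_pos.2 (hTf y)

/-- If grounding a second state never changes the weight, then following positive transitions
from any state eventually leads to every other one. -/
theorem IsStochastic.exists_iterate_eq (hT : IsStochastic T) {i : Fin n}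
    (hi : 0 < rootWeight T i) (hpair : ∀ j, i ≠ j → pairWeight T i j = rootWeight T i)
    {f : Fin n → Fin n} (hf : ∀ k, f k ≠ k) (hTf : ∀ k, 0 < T k (f k)) (x : Fin n) :
    ∃ m, f^[m] x = i := by
  by_contra! hx
  have hM := hT.isDominantZ_groundedLaplacian i
  obtain ⟨m, m', hne, heq⟩ := Finite.exists_ne_map_eq_of_infinite fun m : ℕ => f^[m] x
  wlog hlt : m < m' generalizing m m'
  · exact this m' m hne.symm heq.symm (by omega)
  obtain ⟨p, rfl⟩ := Nat.exists_eq_add_of_lt hlt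
  set j := f^[m] x with hj
  have hji (s : ℕ) : f^[s] j ≠ i := by
    rw [hj, ← Function.iterate_add_apply]
    exact hx _
  have hper : f^[p] (f j) = j := by
    rw [← Function.iterate_succ_apply, hj, ← Function.iterate_add_apply]
    convert! heq.symm using 2
    omega
  have hdet : (groundedLaplacian T i).det =
      groundedLaplacian T i j j * (groundedLaplacian T i).adjugate j j := by
    rw [← pairWeight_eq_mul_adjugate, hpair j (hji 0).symm, rootWeight]
  have hjj : 0 < (groundedLaplacian T i).adjugate j j := by
    refine (hM.adjugate_nonneg j j).lt_of_ne fun h => ?_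
    rw [← h, mul_zero] at hdet
    exact hi.ne' hdet
  have hpos := hT.adjugate_pos_of_iterate hjj hf hTf p (f j) (fun s => hji (s + 1)) hper
  refine hpos.ne' (hM.adjugate_eq_zero (hf j).symm ?_ hdet)
  rw [groundedLaplacian_apply (show j ≠ i from hji 0) (hf j).symm]
  exact neg_neg_iff_pos.2 (hTf j)

/-- If every choice of positive transitions is surjective, then each state has at most one
positive transition to another state. -/
theorem eq_of_forall_selector_surjective {f : Fin n → Fin n} (hf : ∀ k, f k ≠ k)
    (hTf : ∀ k, 0 < T k (f k))
    (hsurj : ∀ g : Fin n → Fin n, (∀ k, g k ≠ k) → (∀ k, 0 < T k (g k)) → g.Surjective)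
    {k l : Fin n} (hkl : l ≠ k) (hTkl : 0 < T k l) : l = f k := by
  by_contra hne
  have hg := Finite.injective_iff_surjective.2 <| hsurj (Function.update f k l)
    (fun y => by rcases eq_or_ne y k with rfl | hy <;> simp [*])
    (fun y => by rcases eq_or_ne y k with rfl | hy <;> simp [*])
  obtain ⟨y, hy⟩ := hsurj f hf hTf l
  have hyk : y ≠ k := by
    rintro rfl
    exact hne hy.symm
  exact hyk (hg (by rw [Function.update_self, Function.update_of_ne hyk, hy]))

/-- The entries of `D + (1 - D) C`, where `D = diagonal d` and `C` is the permutation matrix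
of `σ`. -/
theorem diagonal_add_mul_perm_apply (d : Fin n → ℝ) (σ : Equiv.Perm (Fin n)) (k l : Fin n) :
    (diagonal d + (1 - diagonal d) * of fun i j => if j = σ i then (1 : ℝ) else 0) k l =
      (if k = l then d k else 0) + if l = σ k then 1 - d k else 0 := by
  rw [Matrix.add_apply, diagonal_apply, ← diagonal_one, diagonal_sub, diagonal_mul]
  simp

theorem IsStochastic.exists_selector (hT : IsStochastic T) (hdiag : ∀ i, T i i < 1) :
    ∃ f : Fin n → Fin n, (∀ k, f k ≠ k) ∧ ∀ k, 0 < T k (f k) := by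
  have (k : Fin n) : ∃ l, l ≠ k ∧ 0 < T k l := by
    by_contra! h
    have hsum := hT.2 k
    rw [← add_sum_erase _ _ (mem_univ k)] at hsum
    have := sum_nonpos fun l (hl : l ∈ univ.erase k) => h l (ne_of_mem_erase hl)
    linarith [hdiag k]
  choose f hf using this
  exact ⟨f, fun k => (hf k).1, fun k => (hf k).2⟩

theorem IsStochastic.exists_isCycle (hT : IsStochastic T) (hn : 0 < n) (hdiag : ∀ i, T i i < 1)
    (hpos : ∀ i, 0 < rootWeight T i)
    (hpair : ∀ i j, i ≠ j → pairWeight T i j = rootWeight T i) :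
    ∃ σ : Equiv.Perm (Fin n), σ.IsCycle ∧ σ.support = univ ∧
      T = diagonal (fun i => T i i) + (1 - diagonal fun i => T i i) *
        of (fun i j => if j = σ i then (1 : ℝ) else 0) := by
  obtain ⟨f, hf, hTf⟩ := hT.exists_selector hdiag
  have hsurj (g : Fin n → Fin n) (hg : ∀ k, g k ≠ k) (hTg : ∀ k, 0 < T k (g k)) :
      g.Surjective := fun i => by
    obtain ⟨m, hm⟩ := hT.exists_iterate_eq (hpos i) (hpair i) hg hTg (g i)
    exact ⟨g^[m] i, by rw [← Function.iterate_succ_apply' g, Function.iterate_succ_apply, hm]⟩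
  let σ : Equiv.Perm (Fin n) := Equiv.ofBijective f
    (Finite.injective_iff_bijective.1 (Finite.injective_iff_surjective.2 (hsurj f hf hTf)))
  have hσ (k : Fin n) : σ k = f k := rfl
  refine ⟨σ, ⟨⟨0, hn⟩, hf _, fun y _ => ?_⟩, ?_, ?_⟩
  · obtain ⟨m, hm⟩ := hT.exists_iterate_eq (hpos y) (hpair y) hf hTf ⟨0, hn⟩
    refine ⟨m, ?_⟩
    rw [zpow_natCast, Equiv.Perm.coe_pow]
    exact hm
  · ext k
    simpa [hσ] using hf k
  · have hzero (k l : Fin n) (hkl : l ≠ k) (hl : l ≠ f k) : T k l = 0 := by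
      by_contra h
      exact hl (eq_of_forall_selector_surjective hf hTf hsurj hkl
        ((hT.1 k l).lt_of_ne (Ne.symm h)))
    ext k l
    rw [diagonal_add_mul_perm_apply, hσ]
    rcases eq_or_ne l k with rfl | hkl
    · simp [(hf l).symm]
    · rw [if_neg hkl.symm, zero_add]
      split_ifs with hl
      · subst hl
        have hsum := hT.2 k
        rw [Fintype.sum_eq_add k (f k) (hf k).symm fun x hx => hzero k x hx.1 hx.2] at hsum
        linarith
      · exact hzero k l hkl hl

theorem Equiv.Perm.IsCycle.exists_pow_apply_eq {σ : Equiv.Perm (Fin n)} (hσ : σ.IsCycle)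
    (hsupp : σ.support = univ) (x y : Fin n) : ∃ m : ℕ, (σ ^ m) x = y := by
  have hne (k : Fin n) : σ k ≠ k := Equiv.Perm.mem_support.1 (hsupp ▸ mem_univ k)
  exact hσ.exists_pow_eq (hne x) (hne y)

theorem det_eq_prod_diag_of_isCycle {σ : Equiv.Perm (Fin n)} (hσ : σ.IsCycle)
    (hsupp : σ.support = univ) {M : Matrix (Fin n) (Fin n) ℝ}
    (hM : ∀ k l, l ≠ k → l ≠ σ k → M k l = 0) {i : Fin n} (hi : M i (σ i) = 0) :
    M.det = ∏ k, M k k := by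
  rw [det_eq_sum_prod_rows, Fintype.sum_eq_single 1]
  · simp
  · intro π hπ
    suffices ∃ k, M k (π k) = 0 by
      obtain ⟨k, hk⟩ := this
      rw [prod_eq_zero (mem_univ k) hk, mul_zero]
    by_contra! h
    have hπσ (k : Fin n) (hk : π k ≠ k) : π k = σ k := by
      by_contra hk'
      exact h k (hM k _ hk hk')
    have hstep (k : Fin n) (hk : π k ≠ k) : π (σ k) ≠ σ k := fun hfix => by
      rw [← hπσ k hk] at hfix
      exact hk (π.injective hfix)
    obtain ⟨k, hk⟩ : ∃ k, π k ≠ k := by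
      by_contra! hall
      exact hπ (Equiv.ext hall)
    have hall (m : ℕ) : π ((σ ^ m) k) ≠ (σ ^ m) k := by
      induction m with
      | zero => simpa using hk
      | succ m ih =>
        rw [pow_succ', Equiv.Perm.mul_apply]
        exact hstep _ ih
    obtain ⟨m, hm⟩ := hσ.exists_pow_apply_eq hsupp k i
    have hπi : π i ≠ i := hm ▸ hall m
    exact h i (hπσ i hπi ▸ hi)

theorem pairWeight_eq_rootWeight_of_isCycle {σ : Equiv.Perm (Fin n)} (hσ : σ.IsCycle)
    (hsupp : σ.support = univ) (hT : ∀ k l, l ≠ k → l ≠ σ k → T k l = 0) (i j : Fin n) :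
    pairWeight T i j = rootWeight T i := by
  have hne (k : Fin n) : σ k ≠ k := Equiv.Perm.mem_support.1 (hsupp ▸ mem_univ k)
  have hG (k l : Fin n) (hkl : l ≠ k) (hl : l ≠ σ k) : groundedLaplacian T i k l = 0 := by
    rcases eq_or_ne k i with rfl | hki
    · simp [groundedLaplacian, hkl]
    · rw [groundedLaplacian_apply hki hkl.symm, hT k l hkl hl, neg_zero]
  have hGi : groundedLaplacian T i i (σ i) = 0 := by simp [groundedLaplacian, hne i]
  rw [rootWeight, det_eq_prod_diag_of_isCycle hσ hsupp hG hGi, pairWeight,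
    det_eq_prod_diag_of_isCycle hσ hsupp (i := j)]
  · refine prod_congr rfl fun k _ => ?_
    rcases eq_or_ne k j with rfl | hkj
    · rw [updateRow_self, Pi.single_eq_same, groundedLaplacian_diag]
    · rw [updateRow_ne hkj]
  · intro k l hkl hl
    rcases eq_or_ne k j with rfl | hkj
    · rw [updateRow_self, Pi.single_eq_of_ne hkl]
    · rw [updateRow_ne hkj, hG k l hkl hl]
  · rw [updateRow_self, Pi.single_eq_of_ne (hne j)]

theorem singleEssentialClass_of_isCycle (hn : 0 < n) {σ : Equiv.Perm (Fin n)} (hσ : σ.IsCycle)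
    (hsupp : σ.support = univ) (hT : ∀ k, 0 < T k (σ k)) : SingleEssentialClass T := by
  have hreach (x y : Fin n) : reaches T x y := by
    obtain ⟨m, rfl⟩ := hσ.exists_pow_apply_eq hsupp x y
    induction m with
    | zero => exact Relation.ReflTransGen.refl
    | succ m ih =>
      refine ih.tail ?_
      rw [pow_succ', Equiv.Perm.mul_apply]
      exact hT _
  exact ⟨⟨⟨0, hn⟩, fun _ _ => hreach _ _⟩, fun i j _ _ => hreach i j⟩

end Cycle

section Kemeny

variable {n : ℕ} {T : Matrix (Fin n) (Fin n) ℝ}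

theorem kemeny_sub_eq_gap_div (hn : 0 < n) (hT : IsStochastic T) (hdiag : ∀ i, T i i < 1)
    (hS : SingleEssentialClass T) :
    ∃ c : ℝ, 0 < c ∧
      kemeny T - (1 / (2 * ∑ j, (1 - T j j)⁻¹)) *
        ((∑ j, (1 - T j j)⁻¹) ^ 2 - ∑ j, ((1 - T j j)⁻¹) ^ 2) =
      ((∑ i, (1 - T i i)⁻¹) *
        (∑ i, ∑ j ∈ univ.erase i, (1 - T i i)⁻¹ * (1 - T j j)⁻¹ * pairWeight T i j) -
      ((∑ i, (1 - T i i)⁻¹) ^ 2 - ∑ i, ((1 - T i i)⁻¹) ^ 2) *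
        ∑ i, (1 - T i i)⁻¹ * rootWeight T i) / c := by
  have ha (i : Fin n) : 0 < (1 - T i i)⁻¹ := inv_pos.2 (sub_pos.2 (hdiag i))
  obtain ⟨e, he⟩ := hS.exists_rootWeight_pos hT hdiag
  have hV : 0 < ∑ i, (1 - T i i)⁻¹ * rootWeight T i :=
    sum_pos' (fun i _ => mul_nonneg (ha i).le (hT.rootWeight_nonneg i))
      ⟨e, mem_univ e, mul_pos (ha e) he⟩
  have hA : 0 < ∑ i, (1 - T i i)⁻¹ := sum_pos (fun i _ => ha i) ⟨e, mem_univ e⟩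
  refine ⟨2 * (∑ i, (1 - T i i)⁻¹) * ∑ i, (1 - T i i)⁻¹ * rootWeight T i, by positivity, ?_⟩
  rw [kemeny_eq_div (hT.charpoly_eval_one hn)
    (by rw [eval_one_derivative_charpoly_eq_rootWeight hdiag]; exact hV.ne'),
    eval_one_derivative_charpoly_eq_rootWeight hdiag,
    eval_one_derivative_derivative_charpoly_eq_pairWeight hdiag]
  have hA' := hA.ne'
  have hV' := hV.ne'
  generalize ∑ i, (1 - T i i)⁻¹ * rootWeight T i = V at *
  generalize ∑ i, (1 - T i i)⁻¹ = A at *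
  field_simp

theorem IsStochastic.le_kemeny (hn : 0 < n) (hT : IsStochastic T) (hdiag : ∀ i, T i i < 1)
    (hS : SingleEssentialClass T) :
    (1 / (2 * ∑ j, (1 - T j j)⁻¹)) *
      ((∑ j, (1 - T j j)⁻¹) ^ 2 - ∑ j, ((1 - T j j)⁻¹) ^ 2) ≤ kemeny T := by
  obtain ⟨c, hc, h⟩ := kemeny_sub_eq_gap_div hn hT hdiag hS
  rw [← sub_nonneg, h]
  exact div_nonneg (gap_nonneg (fun i => inv_pos.2 (sub_pos.2 (hdiag i)))
    hT.rootWeight_le_pairWeight fun _ _ => pairWeight_comm) hc.le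

theorem IsStochastic.kemeny_eq_iff_pairWeight (hn : 0 < n) (hT : IsStochastic T)
    (hdiag : ∀ i, T i i < 1) (hS : SingleEssentialClass T) :
    kemeny T = (1 / (2 * ∑ j, (1 - T j j)⁻¹)) *
      ((∑ j, (1 - T j j)⁻¹) ^ 2 - ∑ j, ((1 - T j j)⁻¹) ^ 2) ↔
    ∀ i j, i ≠ j → pairWeight T i j = rootWeight T i := by
  obtain ⟨c, hc, h⟩ := kemeny_sub_eq_gap_div hn hT hdiag hS
  rw [← sub_eq_zero, h, div_eq_zero_iff, or_iff_left hc.ne']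
  exact gap_eq_zero_iff (fun i => inv_pos.2 (sub_pos.2 (hdiag i)))
    hT.rootWeight_le_pairWeight fun _ _ => pairWeight_comm

theorem IsStochastic.kemeny_eq_iff_exists_isCycle (hn : 0 < n) (hT : IsStochastic T)
    (hdiag : ∀ i, T i i < 1) (hS : SingleEssentialClass T) :
    kemeny T = (1 / (2 * ∑ j, (1 - T j j)⁻¹)) *
      ((∑ j, (1 - T j j)⁻¹) ^ 2 - ∑ j, ((1 - T j j)⁻¹) ^ 2) ↔
    ∃ σ : Equiv.Perm (Fin n), σ.IsCycle ∧ σ.support = univ ∧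
      T = diagonal (fun i => T i i) + (1 - diagonal fun i => T i i) *
        of (fun i j => if j = σ i then (1 : ℝ) else 0) := by
  rw [hT.kemeny_eq_iff_pairWeight hn hdiag hS]
  constructor
  · intro h
    obtain ⟨e, he⟩ := hS.exists_rootWeight_pos hT hdiag
    refine hT.exists_isCycle hn hdiag (fun i => ?_) h
    rcases eq_or_ne i e with rfl | hie
    · exact he
    · rwa [← h i e hie, pairWeight_comm hie, h e i hie.symm]
  · rintro ⟨σ, hσ, hsupp, hTσ⟩ i j -
    refine pairWeight_eq_rootWeight_of_isCycle hσ hsupp (fun k l hkl hl => ?_) i j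
    rw [hTσ, diagonal_add_mul_perm_apply, if_neg hkl.symm, if_neg hl, add_zero]

end Kemeny

section Attained

variable {n : ℕ} {d : Fin n → ℝ} {σ : Equiv.Perm (Fin n)}

theorem isStochastic_diagonal_add_mul_perm (hd : ∀ j, 0 ≤ d j ∧ d j < 1) :
    IsStochastic
      (diagonal d + (1 - diagonal d) * of fun i j => if j = σ i then (1 : ℝ) else 0) := by
  refine ⟨fun k l => ?_, fun k => ?_⟩
  · rw [diagonal_add_mul_perm_apply]
    have := hd k
    refine add_nonneg ?_ ?_ <;> split_ifs <;> linarith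
  · simp only [diagonal_add_mul_perm_apply, sum_add_distrib, sum_ite_eq, sum_ite_eq', mem_univ,
      if_true]
    ring

theorem exists_isCycle_support_eq_univ (hn : 2 ≤ n) :
    ∃ σ : Equiv.Perm (Fin n), σ.IsCycle ∧ σ.support = univ := by
  obtain ⟨m, rfl⟩ := Nat.exists_eq_add_of_le' hn
  exact ⟨finRotate (m + 2), isCycle_finRotate, support_finRotate⟩

end Attained

/-- Minimizing Kemeny's constant over stochastic completions of a partial
stochastic matrix with specified diagonal `d`: the minimum value is the stated
expression, it is attained, and it is attained exactly at the matrices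
`D + (I-D)C` with `C` the permutation matrix of an `n`-cycle. -/
theorem diag_completion_min_kemeny
    (n : ℕ) (hn : 2 ≤ n) (d : Fin n → ℝ) (hd : ∀ j, 0 ≤ d j ∧ d j < 1) :
    (∀ T : Matrix (Fin n) (Fin n) ℝ, IsStochastic T → (∀ j, T j j = d j) →
      SingleEssentialClass T →
      (1 / (2 * ∑ j, (1 - d j)⁻¹)) *
          ((∑ j, (1 - d j)⁻¹) ^ 2 - ∑ j, ((1 - d j)⁻¹) ^ 2) ≤ kemeny T) ∧
    (∃ T : Matrix (Fin n) (Fin n) ℝ, IsStochastic T ∧ (∀ j, T j j = d j) ∧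
      SingleEssentialClass T ∧
      kemeny T = (1 / (2 * ∑ j, (1 - d j)⁻¹)) *
          ((∑ j, (1 - d j)⁻¹) ^ 2 - ∑ j, ((1 - d j)⁻¹) ^ 2)) ∧
    (∀ T : Matrix (Fin n) (Fin n) ℝ, IsStochastic T → (∀ j, T j j = d j) →
      SingleEssentialClass T →
      (kemeny T = (1 / (2 * ∑ j, (1 - d j)⁻¹)) *
          ((∑ j, (1 - d j)⁻¹) ^ 2 - ∑ j, ((1 - d j)⁻¹) ^ 2) ↔
        ∃ σ : Equiv.Perm (Fin n), σ.IsCycle ∧ σ.support = Finset.univ ∧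
          T = Matrix.diagonal d + (1 - Matrix.diagonal d) *
            Matrix.of (fun i j => if j = σ i then (1 : ℝ) else 0))) := by
  have hn0 : 0 < n := by omega
  have hdiag {T : Matrix (Fin n) (Fin n) ℝ} (h : ∀ j, T j j = d j) (i : Fin n) : T i i < 1 :=
    h i ▸ (hd i).2
  have hiff (T : Matrix (Fin n) (Fin n) ℝ) (hT : IsStochastic T) (h : ∀ j, T j j = d j)
      (hS : SingleEssentialClass T) := hT.kemeny_eq_iff_exists_isCycle hn0 (hdiag h) hS
  refine ⟨fun T hT h hS => ?_, ?_, fun T hT h hS => ?_⟩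
  · simpa only [h] using hT.le_kemeny hn0 (hdiag h) hS
  · obtain ⟨σ, hσ, hsupp⟩ := exists_isCycle_support_eq_univ hn
    have hne (k : Fin n) : σ k ≠ k := Equiv.Perm.mem_support.1 (hsupp ▸ mem_univ k)
    have hT := isStochastic_diagonal_add_mul_perm (σ := σ) hd
    have hentry := diagonal_add_mul_perm_apply d σ
    generalize hTdef : (diagonal d + (1 - diagonal d) *
      of fun i j => if j = σ i then (1 : ℝ) else 0) = T at hT hentry
    have h (j : Fin n) : T j j = d j := by simp [hentry, (hne j).symm]
    have hS : SingleEssentialClass T := singleEssentialClass_of_isCycle hn0 hσ hsupp fun k => by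
      simpa [hentry, (hne k).symm] using (hd k).2
    refine ⟨T, hT, h, hS, ?_⟩
    have hval := (hiff T hT h hS).2
    simp only [h] at hval
    exact hval ⟨σ, hσ, hsupp, hTdef.symm⟩
  · simpa only [h] using hiff T hT h hS
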